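/- Assume Setting (C) and suppose the sequence 𝓗 = {log h_n} is weakly almost additive on Y. If the 2×2 submatrix M_{22}|_{π^{-1}(22)} is similar over ℝ either to a Jordan block [[α, 1],[0, α]] for some α ∈ ℝ, or to a diagonal matrix diag(α, β) with β ≠ −α, then the limit lim_{n→∞} h[12^{n+1}]/h[2^{n+1}] exists and is a positive real number. -/

import Mathlib

open MeasureTheory Filter Topology

noncomputable section

/-- The one-sided shift map. -/
def shift {A : Type*} : (ℕ → A) → ℕ → A := fun x i => x (i + 1)

/-- A finite word appears in some point of `X`. -/
def AppearsIn {A : Type*} (X : Set (ℕ → A)) (w : List A) : Prop :=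
  ∃ x ∈ X, ∃ m : ℕ, ∀ i : Fin w.length, x (m + i) = w.get i

/-- `X` is a (one-sided) subshift: a closed, shift-invariant set. -/
def IsSubshift {A : Type*} [TopologicalSpace A] (X : Set (ℕ → A)) : Prop :=
  IsClosed X ∧ shift '' X ⊆ X

/-- The weak specification property. -/
def WeakSpec {A : Type*} (X : Set (ℕ → A)) : Prop :=
  ∃ p : ℕ, ∀ u v : List A, AppearsIn X u → AppearsIn X v →
    ∃ w : List A, w.length ≤ p ∧ AppearsIn X (u ++ w ++ v)

/-- The cylinder set `[x_1 … x_n]` inside `X`. -/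
def cyl {A : Type*} (X : Set (ℕ → A)) (x : ℕ → A) (n : ℕ) : Set (ℕ → A) :=
  {z ∈ X | ∀ i < n, z i = x i}

/-- Birkhoff sum `(S_n g)(x)`. -/
def birk {A : Type*} (g : (ℕ → A) → ℝ) (n : ℕ) (x : ℕ → A) : ℝ :=
  ∑ i ∈ Finset.range n, g (shift^[i] x)

/-- `μ` is a shift-invariant Borel probability measure concentrated on `X`,
i.e. an element of `M(X, σ_X)`. -/
def IsInvariantOn {A : Type*} [MeasurableSpace A] (μ : Measure (ℕ → A))
    (X : Set (ℕ → A)) : Prop :=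
  IsProbabilityMeasure μ ∧ μ X = 1 ∧
    ∀ B : Set (ℕ → A), MeasurableSet B → μ (shift ⁻¹' B) = μ B

/-- `μ` is a Gibbs measure for the sequence `𝓕 = {log f_n}`. -/
def GibbsSeq {A : Type*} [MeasurableSpace A] (X : Set (ℕ → A))
    (f : ℕ → (ℕ → A) → ℝ) (μ : Measure (ℕ → A)) : Prop :=
  ∃ P C : ℝ, 0 < C ∧ ∀ x ∈ X, ∀ n : ℕ, 1 ≤ n →
    C⁻¹ ≤ (μ (cyl X x n)).toReal / (Real.exp (-(n : ℝ) * P) * f n x) ∧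
    (μ (cyl X x n)).toReal / (Real.exp (-(n : ℝ) * P) * f n x) ≤ C

/-- `μ` is a weak Gibbs measure for the sequence `𝓕 = {log f_n}`. -/
def WeakGibbsSeq {A : Type*} [MeasurableSpace A] (X : Set (ℕ → A))
    (f : ℕ → (ℕ → A) → ℝ) (μ : Measure (ℕ → A)) : Prop :=
  ∃ P : ℝ, ∃ C : ℕ → ℝ, (∀ n : ℕ, 1 ≤ n → 0 < C n) ∧
    Tendsto (fun n : ℕ => Real.log (C n) / n) atTop (𝓝 0) ∧
    ∀ x ∈ X, ∀ n : ℕ, 1 ≤ n →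
      (C n)⁻¹ ≤ (μ (cyl X x n)).toReal / (Real.exp (-(n : ℝ) * P) * f n x) ∧
      (μ (cyl X x n)).toReal / (Real.exp (-(n : ℝ) * P) * f n x) ≤ C n

/-- `μ` is a Gibbs measure for the (Borel measurable) function `g`. -/
def GibbsFun {A : Type*} [MeasurableSpace A] (X : Set (ℕ → A))
    (g : (ℕ → A) → ℝ) (μ : Measure (ℕ → A)) : Prop :=
  GibbsSeq X (fun n x => Real.exp (birk g n x)) μ

/-- `μ` is a weak Gibbs measure for the (Borel measurable) function `g`. -/
def WeakGibbsFun {A : Type*} [MeasurableSpace A] (X : Set (ℕ → A))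
    (g : (ℕ → A) → ℝ) (μ : Measure (ℕ → A)) : Prop :=
  WeakGibbsSeq X (fun n x => Real.exp (birk g n x)) μ

/-- The sequence `{log f_n}` is almost additive on `X` with constant `C`. -/
def AAOn {A : Type*} (X : Set (ℕ → A)) (f : ℕ → (ℕ → A) → ℝ) (C : ℝ) : Prop :=
  ∀ x ∈ X, ∀ n m : ℕ, 1 ≤ n → 1 ≤ m →
    Real.exp (-C) * (f n x * f m (shift^[n] x)) ≤ f (n + m) x ∧
    f (n + m) x ≤ Real.exp C * (f n x * f m (shift^[n] x))

/-- The sequence `{log f_n}` is weakly almost additive on `X`. -/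
def WeakAAOn {A : Type*} (X : Set (ℕ → A)) (f : ℕ → (ℕ → A) → ℝ) : Prop :=
  ∃ C : ℕ → ℝ, (∀ n : ℕ, 1 ≤ n → 0 < C n) ∧
    Tendsto (fun n : ℕ => C n / n) atTop (𝓝 0) ∧
    ∀ x ∈ X, ∀ n m : ℕ, 1 ≤ n → 1 ≤ m →
      Real.exp (-(C n)) * (f n x * f m (shift^[n] x)) ≤ f (n + m) x ∧
      f (n + m) x ≤ Real.exp (C n) * (f n x * f m (shift^[n] x))

open scoped Classical

/-- `g_n(y) = sup_{E_n(y)} Σ_{x ∈ E_n(y)} e^{(S_n f)(x)}`: the sum, over all `n`-blocks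
of `X` projecting to `y_1…y_n`, of the sup of `e^{S_n f}` over the corresponding
cylinder. -/
noncomputable def gseq {kX kY : ℕ} (X : Set (ℕ → Fin kX)) (πs : Fin kX → Fin kY)
    (f : (ℕ → Fin kX) → ℝ) (n : ℕ) (y : ℕ → Fin kY) : ℝ :=
  ∑ u : Fin n → Fin kX,
    if ((∃ x ∈ X, ∀ i : Fin n, x ↑i = u i) ∧ ∀ i : Fin n, πs (u i) = y ↑i) then
      ⨆ x : ↥{z ∈ X | ∀ i : Fin n, z ↑i = u i}, Real.exp (birk f n ↑x)
    else 0

/-- `h_n(y) = sup_{E_n(y)} Σ_{x ∈ E_n(y)} e^{(S_{n-1} f)(x)}` for `n ≥ 2`, and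
`h_1 = g_1`. -/
noncomputable def hseqS {kX kY : ℕ} (X : Set (ℕ → Fin kX)) (πs : Fin kX → Fin kY)
    (f : (ℕ → Fin kX) → ℝ) (n : ℕ) (y : ℕ → Fin kY) : ℝ :=
  if n ≤ 1 then gseq X πs f n y
  else
    ∑ u : Fin n → Fin kX,
      if ((∃ x ∈ X, ∀ i : Fin n, x ↑i = u i) ∧ ∀ i : Fin n, πs (u i) = y ↑i) then
        ⨆ x : ↥{z ∈ X | ∀ i : Fin n, z ↑i = u i}, Real.exp (birk f (n - 1) ↑x)
      else 0

/-- Irreducibility of a subshift: any two words appearing in `X` can be connected. -/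
def IrreducibleShift {A : Type*} (X : Set (ℕ → A)) : Prop :=
  ∀ u v : List A, AppearsIn X u → AppearsIn X v →
    ∃ w : List A, AppearsIn X (u ++ w ++ v)

/-- For a factor map collapsing all symbols except `0`, and a two-coordinate potential
given by `F`: `h_n(y)` is the sum over `n`-blocks `x_1…x_n` of `X` with
`π(x_1)…π(x_n) = y_1…y_n` of `e^{F(x_1,x_2)+⋯+F(x_{n-1},x_n)}` (for `n ≥ 2`), and
`h_1(y) = Σ_{a : π(a) = y_1} sup_{x ∈ [a]} e^{f(x)}`. -/
noncomputable def hseqC {l : ℕ} (X : Set (ℕ → Fin l)) (πs : Fin l → Fin 2)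
    (F : Fin l → Fin l → ℝ) (f : (ℕ → Fin l) → ℝ) (n : ℕ) (y : ℕ → Fin 2) : ℝ :=
  if n ≤ 1 then
    ∑ a : Fin l,
      if πs a = y 0 then (⨆ x : ↥{z ∈ X | z 0 = a}, Real.exp (f ↑x)) else 0
  else
    ∑ u : Fin n → Fin l,
      if ((∃ x ∈ X, ∀ i : Fin n, x ↑i = u i) ∧ ∀ i : Fin n, πs (u i) = y ↑i) then
        Real.exp (∑ i : Fin n,
          if h : (↑i + 1 : ℕ) < n then F (u i) (u ⟨↑i + 1, h⟩) else 0)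
      else 0

/-- The one-block map of Setting (C): symbol `1` (here `0`) goes to `1` (here `0`),
symbols `2, 3` (here `1, 2`) go to `2` (here `1`). -/
def projC {l : ℕ} : Fin l → Fin 2 := fun a => if (a : ℕ) = 0 then 0 else 1

/-- The matrix `M(i,j) = e^{f[ij]} a_{ij}` of Setting (C). -/
noncomputable def MC {l : ℕ} (A : Fin l → Fin l → ℕ) (F : Fin l → Fin l → ℝ) :
    Fin l → Fin l → ℝ := fun i j => Real.exp (F i j) * (A i j : ℝ)

/-- Similarity of `2 × 2` real matrices. -/
def Similar2 (M N : Matrix (Fin 2) (Fin 2) ℝ) : Prop :=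
  ∃ P : Matrix (Fin 2) (Fin 2) ℝ, IsUnit P.det ∧ N = P⁻¹ * M * P

/-- summand of `hseqC` -/
noncomputable def termC (X : Set (ℕ → Fin 3)) (F : Fin 3 → Fin 3 → ℝ) (n : ℕ)
    (y : ℕ → Fin 2) (u : Fin (n + 1) → Fin 3) : ℝ :=
  if ((∃ x ∈ X, ∀ i : Fin (n + 1), x ↑i = u i) ∧ ∀ i : Fin (n + 1), projC (u i) = y ↑i) then
        Real.exp (∑ i : Fin (n + 1),
          if h : (↑i + 1 : ℕ) < n + 1 then F (u i) (u ⟨↑i + 1, h⟩) else 0)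
      else 0

noncomputable def TC (X : Set (ℕ → Fin 3)) (F : Fin 3 → Fin 3 → ℝ) (n : ℕ)
    (y : ℕ → Fin 2) (a : Fin 3) : ℝ :=
  ∑ u : Fin n → Fin 3, termC X F n y (Fin.cons a u : Fin (n + 1) → Fin 3)

lemma sum_cons {n : ℕ} (g : (Fin (n + 1) → Fin 3) → ℝ) :
    ∑ u, g u = ∑ a : Fin 3, ∑ u : Fin n → Fin 3, g (Fin.cons a u) := by
  rw [← Fintype.sum_prod_type']
  exact (Fintype.sum_equiv (Fin.consEquiv (fun _ => Fin 3)) _ _ (fun p => rfl)).symm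

lemma hseqC_eq (X : Set (ℕ → Fin 3)) (F : Fin 3 → Fin 3 → ℝ) (f : (ℕ → Fin 3) → ℝ) (n : ℕ)
    (y : ℕ → Fin 2) : hseqC X projC F f (n + 2) y = ∑ a, TC X F (n + 1) y a := by
  unfold hseqC
  rw [if_neg (by omega)]
  exact sum_cons (termC X F (n + 1) y)

lemma termC_cons (A : Fin 3 → Fin 3 → ℕ) (hA01 : ∀ i j, A i j = 0 ∨ A i j = 1)
    (X : Set (ℕ → Fin 3)) (hXdef : X = {x | ∀ n : ℕ, A (x n) (x (n + 1)) = 1})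
    (F : Fin 3 → Fin 3 → ℝ) (n : ℕ) (y : ℕ → Fin 2) (a : Fin 3) (z : Fin (n + 1) → Fin 3) :
    termC X F (n + 1) y (Fin.cons a z : Fin (n + 2) → Fin 3) =
      (if projC a = y 0 then MC A F a (z 0) else 0) * termC X F n (fun i => y (i + 1)) z := by
  have h1 : (∃ x ∈ X, ∀ i : Fin (n + 2), x ↑i = (Fin.cons a z : Fin (n + 2) → Fin 3) i) ↔
      (A a (z 0) = 1 ∧ ∃ x ∈ X, ∀ i : Fin (n + 1), x ↑i = z i) := by
    constructor
    · rintro ⟨x, hx, h⟩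
      have h0 : x 0 = a := by simpa using h 0
      have hs : ∀ i : Fin (n + 1), x (i + 1) = z i := fun i => by simpa using h i.succ
      rw [hXdef] at hx
      refine ⟨?_, fun i => x (i + 1), ?_, hs⟩
      · have := hx 0
        have h2 := hs 0
        simp only [Fin.val_zero, zero_add] at h2
        rwa [h0, zero_add, h2] at this
      · rw [hXdef]; exact fun k => hx (k + 1)
    · rintro ⟨h, x, hx, hz⟩
      refine ⟨fun i => Nat.casesOn i a x, ?_, ?_⟩
      · rw [hXdef] at hx ⊢
        intro k
        cases k with
        | zero => have := hz 0; simp only [Fin.val_zero] at this; simpa [this] using h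
        | succ k => exact hx k
      · intro i
        refine Fin.cases ?_ (fun i => ?_) i
        · simp
        · simpa using hz i
  have h2 : (∀ i : Fin (n + 2), projC ((Fin.cons a z : Fin (n + 2) → Fin 3) i) = y ↑i) ↔
      (projC a = y 0 ∧ ∀ i : Fin (n + 1), projC (z i) = y (↑i + 1)) := by
    rw [Fin.forall_fin_succ]; simp
  have h3 : (∑ i : Fin (n + 2), if h : (↑i + 1 : ℕ) < n + 2 then
      F ((Fin.cons a z : Fin (n + 2) → Fin 3) i)
        ((Fin.cons a z : Fin (n + 2) → Fin 3) ⟨↑i + 1, h⟩) else 0) =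
      F a (z 0) + ∑ i : Fin (n + 1), if h : (↑i + 1 : ℕ) < n + 1 then
        F (z i) (z ⟨↑i + 1, h⟩) else 0 := by
    rw [Fin.sum_univ_succ]
    congr 1
    refine Finset.sum_congr rfl fun i _ => ?_
    by_cases hi : (i : ℕ) + 1 < n + 1
    · rw [dif_pos hi, dif_pos (by rw [Fin.val_succ]; omega)]; rfl
    · rw [dif_neg hi, dif_neg (by rw [Fin.val_succ]; omega)]
  unfold termC
  simp only [h1, h2, h3]
  unfold MC
  rw [Real.exp_add]
  rcases hA01 a (z 0) with hA | hA <;> by_cases hp : projC a = y 0 <;> simp [hA, hp]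

lemma TC_succ (A : Fin 3 → Fin 3 → ℕ) (hA01 : ∀ i j, A i j = 0 ∨ A i j = 1)
    (X : Set (ℕ → Fin 3)) (hXdef : X = {x | ∀ n : ℕ, A (x n) (x (n + 1)) = 1})
    (F : Fin 3 → Fin 3 → ℝ) (n : ℕ) (y : ℕ → Fin 2) (a : Fin 3) :
    TC X F (n + 1) y a = if projC a = y 0 then
      ∑ b, MC A F a b * TC X F n (fun i => y (i + 1)) b else 0 := by
  unfold TC
  rw [sum_cons]
  simp only [termC_cons A hA01 X hXdef, Fin.cons_zero, ← Finset.mul_sum]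
  split_ifs <;> simp

lemma TC_zero (X : Set (ℕ → Fin 3)) (F : Fin 3 → Fin 3 → ℝ) (n : ℕ) :
    TC X F n (fun _ => 1) 0 = 0 := by
  unfold TC termC
  refine Finset.sum_eq_zero fun u _ => if_neg ?_
  rintro ⟨-, h⟩
  have := h 0
  simp [projC] at this

lemma hseqC_pos (X : Set (ℕ → Fin 3)) (F : Fin 3 → Fin 3 → ℝ) (f : (ℕ → Fin 3) → ℝ) (n : ℕ)
    (y : ℕ → Fin 2) (hy : y ∈ (fun x => (projC (l := 3)) ∘ x) '' X) :
    0 < hseqC X projC F f (n + 2) y := by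
  obtain ⟨x, hx, rfl⟩ := hy
  unfold hseqC
  rw [if_neg (by omega)]
  refine Finset.sum_pos' (fun u _ => by split_ifs <;> positivity)
    ⟨fun i => x i, Finset.mem_univ _, ?_⟩
  rw [if_pos ⟨⟨x, hx, fun _ => rfl⟩, fun _ => rfl⟩]
  positivity

/-- diagonal case -/
lemma lim_diag (s t : ℕ → ℝ) (c K p q p' q' α β : ℝ) (hαβ : |β| < |α|)
    (hs : ∀ n, s n = p' * α ^ n + q' * β ^ n)
    (ht : ∀ n, 1 ≤ n → t n = p * α ^ n + q * β ^ n)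
    (hpos : ∀ n, 1 ≤ n → 0 < t n) (hc : 0 < c) (hb : ∀ n, 1 ≤ n → c * t n ≤ s n ∧ s n ≤ K * t n) :
    ∃ L, Tendsto (fun n => s n / t n) atTop (𝓝 L) := by
  have hα : α ≠ 0 := by rintro rfl; simp at hαβ; linarith [abs_nonneg β]
  have hr : Tendsto (fun n : ℕ => (β / α) ^ n) atTop (𝓝 0) := by
    apply tendsto_pow_atTop_nhds_zero_of_abs_lt_one
    rw [abs_div, div_lt_one (abs_pos.2 hα)]; exact hαβ
  have hlim : ∀ u v : ℝ, Tendsto (fun n : ℕ => u + v * (β / α) ^ n) atTop (𝓝 u) := by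
    intro u v; simpa using (hr.const_mul v).const_add u
  have hfac : ∀ (u v : ℝ) (n : ℕ), u * α ^ n + v * β ^ n = (u + v * (β / α) ^ n) * α ^ n := by
    intro u v n; rw [div_pow]; field_simp
  by_cases hp : p = 0
  · subst hp
    have hβ : β ≠ 0 := by
      rintro rfl; have := hpos 1 le_rfl; rw [ht 1 le_rfl] at this; simp at this
    have hq : q ≠ 0 := by
      rintro rfl; have := hpos 1 le_rfl; rw [ht 1 le_rfl] at this; simp at this
    have hp' : p' = 0 := by
      have hz : Tendsto (fun n : ℕ => K * |q| * |(β / α) ^ n|) atTop (𝓝 0) := by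
        simpa using (hr.abs.const_mul (K * |q|))
      have h1 := (hlim p' q').abs
      have h2 : |p'| ≤ 0 := by
        refine le_of_tendsto_of_tendsto h1 hz ?_
        filter_upwards [eventually_ge_atTop 1] with n hn
        have hb1 := (hb n hn)
        have h0 := hpos n hn
        have hsn : |s n| ≤ K * |t n| := by
          rw [abs_of_pos h0, abs_of_nonneg]; exact hb1.2
          exact le_trans (by positivity) hb1.1
        rw [hs, ht n hn, hfac, hfac, abs_mul, abs_mul, ← mul_assoc] at hsn
        have := le_of_mul_le_mul_right hsn (abs_pos.2 (pow_ne_zero n hα))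
        simpa [abs_mul, mul_assoc] using this
      exact abs_eq_zero.1 (le_antisymm h2 (abs_nonneg _))
    refine ⟨q' / q, tendsto_const_nhds.congr' ?_⟩
    filter_upwards [eventually_ge_atTop 1] with n hn
    rw [hs, ht n hn, hp']
    have := pow_ne_zero n hβ
    field_simp
    ring
  · refine ⟨p' / p, ((hlim p' q').div (hlim p q) hp).congr' ?_⟩
    filter_upwards [eventually_ge_atTop 1] with n hn
    simp only [Pi.div_apply]
    rw [hs, ht n hn, hfac, hfac, mul_div_mul_right _ _ (pow_ne_zero n hα)]

lemma lim_jordan (s t : ℕ → ℝ) (c K p q p' q' α : ℝ)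
    (hs : ∀ n, s n = p' * α ^ n + q' * (n * α ^ (n - 1)))
    (ht : ∀ n, 1 ≤ n → t n = p * α ^ n + q * (n * α ^ (n - 1)))
    (hpos : ∀ n, 1 ≤ n → 0 < t n) (hc : 0 < c) (hb : ∀ n, 1 ≤ n → c * t n ≤ s n ∧ s n ≤ K * t n) :
    ∃ L, Tendsto (fun n => s n / t n) atTop (𝓝 L) := by
  have hα : α ≠ 0 := by
    rintro rfl
    have := hpos 2 (by norm_num)
    rw [ht 2 (by norm_num)] at this
    simp at this
  have hr : Tendsto (fun n : ℕ => ((n : ℝ))⁻¹) atTop (𝓝 0) := tendsto_inv_atTop_nhds_zero_nat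
  have hlim : ∀ u v : ℝ, Tendsto (fun n : ℕ => v + u * α * (n : ℝ)⁻¹) atTop (𝓝 v) := by
    intro u v; simpa using (hr.const_mul (u * α)).const_add v
  have hfac : ∀ (u v : ℝ) (n : ℕ), 1 ≤ n → u * α ^ n + v * (n * α ^ (n - 1)) =
      (v + u * α * (n : ℝ)⁻¹) * (n * α ^ (n - 1)) := by
    intro u v n hn
    obtain ⟨m, rfl⟩ := Nat.exists_eq_add_of_le' hn
    have : ((m + 1 : ℕ) : ℝ) ≠ 0 := by positivity
    simp only [Nat.add_sub_cancel]
    field_simp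
    ring
  have hne : ∀ n : ℕ, 1 ≤ n → ((n : ℝ) * α ^ (n - 1)) ≠ 0 := by
    intro n hn
    have : (n : ℝ) ≠ 0 := by positivity
    exact mul_ne_zero this (pow_ne_zero _ hα)
  by_cases hq : q = 0
  · subst hq
    have hp : p ≠ 0 := by
      rintro rfl; have := hpos 1 le_rfl; rw [ht 1 le_rfl] at this; simp at this
    have hq' : q' = 0 := by
      have hz : Tendsto (fun n : ℕ => K * |p * α * (n : ℝ)⁻¹|) atTop (𝓝 0) := by
        simpa using ((hr.const_mul (p * α)).abs.const_mul K)
      have h1 := (hlim p' q').abs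
      have h2 : |q'| ≤ 0 := by
        refine le_of_tendsto_of_tendsto h1 hz ?_
        filter_upwards [eventually_ge_atTop 1] with n hn
        have hb1 := (hb n hn)
        have h0 := hpos n hn
        have hsn : |s n| ≤ K * |t n| := by
          rw [abs_of_pos h0, abs_of_nonneg]; exact hb1.2
          exact le_trans (by positivity) hb1.1
        rw [hs, ht n hn, hfac _ _ _ hn, hfac _ _ _ hn] at hsn
        have hne' := hne n hn
        generalize (n : ℝ) * α ^ (n - 1) = g at hsn hne'
        rw [abs_mul _ g, abs_mul _ g, ← mul_assoc] at hsn
        have := le_of_mul_le_mul_right hsn (abs_pos.2 hne')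
        rwa [zero_add] at this
      exact abs_eq_zero.1 (le_antisymm h2 (abs_nonneg _))
    refine ⟨p' / p, tendsto_const_nhds.congr' ?_⟩
    filter_upwards [eventually_ge_atTop 1] with n hn
    rw [hs, ht n hn, hq']
    have := pow_ne_zero n hα
    field_simp
    ring
  · refine ⟨q' / q, ((hlim p' q').div (hlim p q) hq).congr' ?_⟩
    filter_upwards [eventually_ge_atTop 1] with n hn
    simp only [Pi.div_apply]
    rw [hs, ht n hn, hfac _ _ _ hn, hfac _ _ _ hn, mul_div_mul_right _ _ (hne n hn)]

lemma sim_pow (B D P : Matrix (Fin 2) (Fin 2) ℝ) (hP : IsUnit P.det) (h : D = P⁻¹ * B * P)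
    (n : ℕ) : B ^ n = P * D ^ n * P⁻¹ := by
  have h1 : P * P⁻¹ = 1 := Matrix.mul_nonsing_inv P hP
  have h2 : P⁻¹ * P = 1 := Matrix.nonsing_inv_mul P hP
  have hB : B = P * D * P⁻¹ := by
    rw [h]; simp only [Matrix.mul_assoc, h1, Matrix.mul_one]
    rw [← Matrix.mul_assoc, h1, Matrix.one_mul]
  induction n with
  | zero => simp [h1]
  | succ n ih =>
    rw [pow_succ, ih, pow_succ]
    nth_rewrite 1 [hB]
    simp only [Matrix.mul_assoc]
    rw [← Matrix.mul_assoc P⁻¹ P, h2, Matrix.one_mul]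

lemma diag_pow (α β : ℝ) (n : ℕ) :
    (!![α, 0; 0, β] : Matrix (Fin 2) (Fin 2) ℝ) ^ n = !![α ^ n, 0; 0, β ^ n] := by
  induction n with
  | zero => simp [Matrix.one_fin_two]
  | succ n ih => rw [pow_succ, ih]; simp [Matrix.mul_fin_two, pow_succ]

lemma jordan_pow (α : ℝ) (n : ℕ) :
    (!![α, 1; 0, α] : Matrix (Fin 2) (Fin 2) ℝ) ^ n = !![α ^ n, n * α ^ (n - 1); 0, α ^ n] := by
  induction n with
  | zero => simp [Matrix.one_fin_two]
  | succ n ih =>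
    rw [pow_succ, ih]
    cases n with
    | zero => simp [Matrix.mul_fin_two]
    | succ n =>
      simp only [Matrix.mul_fin_two, Nat.add_sub_cancel]
      congr! 3 <;> push_cast <;> ring_nf

/-- Lemma `12inf`: under Setting (C), if `𝓗 = {log h_n}` is weakly
almost additive and `M_{22}|_{π^{-1}(22)}` is similar over `ℝ` to a Jordan block
`[[α,1],[0,α]]` or to `diag(α,β)` with `β ≠ −α`, then `lim h[12^{n+1}]/h[2^{n+1}]`
exists and is a positive real. (Symbols `1,2,3` of the paper are `0,1,2` here, and
symbols `1,2` of `Y` are `0,1`.) -/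
theorem stmt_16
    (A : Fin 3 → Fin 3 → ℕ) (hA01 : ∀ i j, A i j = 0 ∨ A i j = 1)
    (X : Set (ℕ → Fin 3)) (hXdef : X = {x | ∀ n : ℕ, A (x n) (x (n + 1)) = 1})
    (hXirr : IrreducibleShift X)
    (Y : Set (ℕ → Fin 2))
    (hYdef : Y = Set.univ ∨ Y = {y | ∀ n : ℕ, ¬(y n = 0 ∧ y (n + 1) = 0)})
    (hYirr : IrreducibleShift Y)
    (hsurj : (fun x => (projC (l := 3)) ∘ x) '' X = Y)
    (F : Fin 3 → Fin 3 → ℝ) (f : (ℕ → Fin 3) → ℝ)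
    (hf : ∀ x : ℕ → Fin 3, f x = F (x 0) (x 1))
    (hWAA : WeakAAOn Y (hseqC X projC F f))
    (hsim : (∃ α : ℝ, Similar2 (Matrix.of fun i j : Fin 2 => MC A F i.succ j.succ)
        !![α, 1; 0, α]) ∨
      (∃ α β : ℝ, β ≠ -α ∧ Similar2 (Matrix.of fun i j : Fin 2 => MC A F i.succ j.succ)
        !![α, 0; 0, β])) :
    ∃ L : ℝ, 0 < L ∧
      Tendsto (fun n : ℕ =>
          hseqC X projC F f (n + 2) (fun i => if i = 0 then 0 else 1) /
            hseqC X projC F f (n + 1) (fun _ => 1)) atTop (𝓝 L) := by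
  obtain ⟨C, -, -, hC⟩ := hWAA
  set y0 : ℕ → Fin 2 := fun i => if i = 0 then 0 else 1 with hy0
  have hy0Y : y0 ∈ Y := by
    rcases hYdef with h | h <;> rw [h]
    · trivial
    · rintro n ⟨-, h2⟩
      simp [hy0] at h2
  have hy1Y : (fun _ => 1 : ℕ → Fin 2) ∈ Y := by
    rcases hYdef with h | h <;> rw [h]
    · trivial
    · rintro n ⟨-, h2⟩
      simp at h2
  have hsh : shift^[1] y0 = fun _ => 1 := by
    funext i; simp [shift, hy0]
  set s : ℕ → ℝ := fun n => hseqC X projC F f (n + 2) y0 with hsdef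
  set t : ℕ → ℝ := fun n => hseqC X projC F f (n + 1) (fun _ => 1) with htdef
  have hspos : ∀ n, 0 < s n := fun n => hseqC_pos X F f n y0 (hsurj ▸ hy0Y)
  have htpos : ∀ n, 1 ≤ n → 0 < t n := by
    intro n hn
    obtain ⟨m, rfl⟩ := Nat.exists_eq_add_of_le' hn
    exact hseqC_pos X F f m _ (hsurj ▸ hy1Y)
  set H := hseqC X projC F f 1 y0 with hH
  have hb0 : ∀ n, Real.exp (-(C 1)) * (H * t n) ≤ s n ∧ s n ≤ Real.exp (C 1) * (H * t n) := by
    intro n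
    have := hC y0 hy0Y 1 (n + 1) le_rfl (by omega)
    rwa [hsh, show 1 + (n + 1) = n + 2 by ring] at this
  have hHpos : 0 < H := by
    have h1 := lt_of_lt_of_le (hspos 1) (hb0 1).2
    have h2 := htpos 1 le_rfl
    have h3 : 0 < H * t 1 := (pos_iff_pos_of_mul_pos h1).1 (Real.exp_pos _)
    exact (pos_iff_pos_of_mul_pos h3).2 h2
  have hc : 0 < Real.exp (-(C 1)) * H := by positivity
  have hb : ∀ n, 1 ≤ n → (Real.exp (-(C 1)) * H) * t n ≤ s n ∧ s n ≤ (Real.exp (C 1) * H) * t n := by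
    intro n _
    rw [mul_assoc, mul_assoc]; exact hb0 n
  set B : Matrix (Fin 2) (Fin 2) ℝ := Matrix.of fun i j : Fin 2 => MC A F i.succ j.succ with hB
  set e : Fin 2 → ℝ := fun j => TC X F 0 (fun _ => 1) j.succ with he
  have hq : ∀ n, (fun j : Fin 2 => TC X F n (fun _ => 1) j.succ) = (B ^ n).mulVec e := by
    intro n
    induction n with
    | zero => simp [he]
    | succ n ih =>
      rw [pow_succ', ← Matrix.mulVec_mulVec, ← ih]
      funext j
      rw [TC_succ A hA01 X hXdef, if_pos (by simp [projC]), Fin.sum_univ_succ, TC_zero]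
      simp [Matrix.mulVec, dotProduct, hB]
  have hsf : ∀ n, s n = ∑ j : Fin 2, MC A F 0 j.succ * (B ^ n).mulVec e j := by
    intro n
    rw [← hq n]
    simp only [hsdef]
    rw [hseqC_eq, Fin.sum_univ_succ, TC_succ A hA01 X hXdef, if_pos (by simp [projC, hy0])]
    have h0 : ∀ j : Fin 2, TC X F (n + 1) y0 j.succ = 0 := by
      intro j
      rw [TC_succ A hA01 X hXdef, if_neg (by simp [projC, hy0])]
    have hy : (fun i => y0 (i + 1)) = fun _ => 1 := by funext i; simp [hy0]
    rw [hy, Fin.sum_univ_succ, TC_zero]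
    simp [h0]
  have htf : ∀ n, 1 ≤ n → t n = ∑ j : Fin 2, (B ^ n).mulVec e j := by
    intro n hn
    rw [← hq n]
    obtain ⟨m, rfl⟩ := Nat.exists_eq_add_of_le' hn
    simp only [htdef]
    rw [hseqC_eq, Fin.sum_univ_succ, TC_zero, zero_add]
  suffices h : ∃ L, Tendsto (fun n => s n / t n) atTop (𝓝 L) by
    obtain ⟨L, hL⟩ := h
    refine ⟨L, lt_of_lt_of_le hc (ge_of_tendsto hL ?_), hL⟩
    filter_upwards [eventually_ge_atTop 1] with n hn
    rw [le_div_iff₀ (htpos n hn)]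
    exact (hb n hn).1
  have key : ∀ w : Fin 2 → ℝ, ∀ D P : Matrix (Fin 2) (Fin 2) ℝ, IsUnit P.det →
      D = P⁻¹ * B * P → ∀ n, ∑ j : Fin 2, w j * (B ^ n).mulVec e j =
        ∑ i : Fin 2, ∑ j : Fin 2, (Matrix.vecMul w P) i * (D ^ n) i j * (P⁻¹.mulVec e) j := by
    intro w D P hP h n
    rw [sim_pow B D P hP h n, ← Matrix.mulVec_mulVec, ← Matrix.mulVec_mulVec]
    change w ⬝ᵥ P.mulVec ((D ^ n).mulVec (P⁻¹.mulVec e)) = _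
    rw [Matrix.dotProduct_mulVec]
    simp [dotProduct, Matrix.mulVec]
    ring
  have htf' : ∀ n, 1 ≤ n → t n = ∑ j : Fin 2, (fun _ => 1 : Fin 2 → ℝ) j * (B ^ n).mulVec e j := by
    intro n hn; rw [htf n hn]; simp
  rcases hsim with ⟨α, P, hP, h⟩ | ⟨α, β, hαβ, P, hP, h⟩
  · have ks := fun n => (hsf n).trans (key (fun j => MC A F 0 j.succ) _ P hP h n)
    have kt := fun n hn => (htf' n hn).trans (key _ _ P hP h n)
    simp only [jordan_pow, Fin.sum_univ_two] at ks kt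
    generalize Matrix.vecMul (fun j : Fin 2 => MC A F 0 j.succ) P = w at ks
    generalize Matrix.vecMul (fun _ : Fin 2 => (1 : ℝ)) P = w' at kt
    generalize P⁻¹.mulVec e = r at ks kt
    refine lim_jordan s t _ _ (w' 0 * r 0 + w' 1 * r 1) (w' 0 * r 1) (w 0 * r 0 + w 1 * r 1)
      (w 0 * r 1) α ?_ ?_ htpos hc hb
    · intro n; rw [ks n]; simp; ring
    · intro n hn; rw [kt n hn]; simp; ring
  · have ks := fun n => (hsf n).trans (key (fun j => MC A F 0 j.succ) _ P hP h n)
    have kt := fun n hn => (htf' n hn).trans (key _ _ P hP h n)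
    simp only [diag_pow, Fin.sum_univ_two] at ks kt
    generalize Matrix.vecMul (fun j : Fin 2 => MC A F 0 j.succ) P = w at ks
    generalize Matrix.vecMul (fun _ : Fin 2 => (1 : ℝ)) P = w' at kt
    generalize P⁻¹.mulVec e = r at ks kt
    rcases lt_trichotomy |β| |α| with hlt | heq | hlt
    · refine lim_diag s t _ _ (w' 0 * r 0) (w' 1 * r 1) (w 0 * r 0) (w 1 * r 1) α β hlt
        ?_ ?_ htpos hc hb
      · intro n; rw [ks n]; simp; ring
      · intro n hn; rw [kt n hn]; simp; ring
    · have hβ : β = α := (abs_eq_abs.1 heq).resolve_right hαβ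
      subst hβ
      refine lim_jordan s t _ _ (w' 0 * r 0 + w' 1 * r 1) 0 (w 0 * r 0 + w 1 * r 1)
        0 β ?_ ?_ htpos hc hb
      · intro n; rw [ks n]; simp; ring
      · intro n hn; rw [kt n hn]; simp; ring
    · refine lim_diag s t _ _ (w' 1 * r 1) (w' 0 * r 0) (w 1 * r 1) (w 0 * r 0) β α hlt
        ?_ ?_ htpos hc hb
      · intro n; rw [ks n]; simp; ring
      · intro n hn; rw [kt n hn]; simp; ring
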